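/- Random phase-only projection preserves full column rank almost surely: Let K ≤ M ≤ N and let B ∈ ℂ^{N×K} be a fixed matrix with full column rank K. For a real phase matrix Φ ∈ ℝ^{N×M}, define W(Φ) ∈ ℂ^{N×M} entrywise by W(Φ)(n,m) = exp(i·Φ(n,m)). Then for Lebesgue-almost every Φ ∈ ℝ^{N×M}, the projected matrix W(Φ)ᴴ·B ∈ ℂ^{M×K} has full column rank K; equivalently, its k-rank equals K = min(M,K). -/

import Mathlib

/-!
Some `W`, not yet with entries of modulus one, makes the columns of `Wᴴ * B` independent: take
`Wᴴ = E * L` with `L` a left inverse of `B` and `E` a matrix with independent columns. Independence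
is a generic property: if `P` is a left inverse of the matrix obtained at this choice, then
`det (P * Wᴴ * B)` is a polynomial in the entries of `Wᴴ` that takes the value `1` there, and the
columns are independent wherever it does not vanish. A nonzero polynomial is almost surely nonzero
when independent random numbers without atoms are substituted for its variables, by Fubini and
induction on the number of variables, applied to the leading coefficient in one of them. The entries
of `Wᴴ` are of this kind, as `φ ↦ exp (i φ)` is analytic and not constant, hence takes each value on
a null set only.
-/

open MeasureTheory Matrix

section GenericPolynomial

variable {R σ : Type*} [CommRing R]

theorem ae_polynomial_eval_ne_zero [IsDomain R] {X : Type*} [MeasurableSpace X] {μ : Measure X}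
    {f : X → R} (hf : ∀ c, ∀ᵐ x ∂μ, f x ≠ c) {p : Polynomial R} (hp : p ≠ 0) :
    ∀ᵐ x ∂μ, p.eval (f x) ≠ 0 := by
  classical
  filter_upwards [(Filter.eventually_all_finset p.roots.toFinset).2 fun c _ => hf c] with x hx h0
  exact hx (f x) (by simpa [hp] using h0) rfl

variable [MeasurableSpace R] [MeasurableAdd₂ R] [MeasurableMul₂ R]

theorem measurable_mvPolynomial_eval (p : MvPolynomial σ R) :
    Measurable fun z : σ → R => MvPolynomial.eval z p := by
  induction p using MvPolynomial.induction_on with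
  | C a => simp
  | add p q hp hq => simpa using hp.fun_add hq
  | mul_X p i hp => simpa using hp.fun_mul (measurable_pi_apply i)

variable [MeasurableSingletonClass R]

theorem measurableSet_mvPolynomial_eval_ne_zero {X : σ → Type*} [∀ i, MeasurableSpace (X i)]
    {f : ∀ i, X i → R} (hfm : ∀ i, Measurable (f i)) (p : MvPolynomial σ R) :
    MeasurableSet {x : ∀ i, X i | MvPolynomial.eval (fun i => f i (x i)) p ≠ 0} := by
  have hm : Measurable fun x : ∀ i, X i => MvPolynomial.eval (fun i => f i (x i)) p :=
    (measurable_mvPolynomial_eval p).comp (by fun_prop)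
  exact hm (measurableSet_singleton 0).compl

variable [IsDomain R]

theorem ae_mvPolynomial_eval_ne_zero_fin {n : ℕ} {X : Fin n → Type*} [∀ i, MeasurableSpace (X i)]
    {μ : ∀ i, Measure (X i)} [∀ i, SigmaFinite (μ i)] {f : ∀ i, X i → R}
    (hfm : ∀ i, Measurable (f i)) (hf : ∀ i c, ∀ᵐ x ∂μ i, f i x ≠ c)
    {p : MvPolynomial (Fin n) R} (hp : p ≠ 0) :
    ∀ᵐ x ∂Measure.pi μ, MvPolynomial.eval (fun i => f i (x i)) p ≠ 0 := by
  induction n with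
  | zero =>
    rw [MvPolynomial.eq_C_of_isEmpty p] at hp ⊢
    exact .of_forall fun x => by simpa using hp
  | succ n ih =>
    have hmeas := measurableSet_mvPolynomial_eval_ne_zero hfm p
    have hcons := ((measurePreserving_piFinSuccAbove μ 0).symm _).comp
      (Measure.measurePreserving_swap (μ := Measure.pi fun i : Fin n => μ i.succ) (ν := μ 0))
    rw [← hcons.map_eq, ae_map_iff hcons.measurable.aemeasurable hmeas]
    refine (Measure.ae_prod_iff_ae_ae (hcons.measurable hmeas)).2 ?_
    set P := MvPolynomial.finSuccEquiv R n p with hP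
    have hP0 : P ≠ 0 := by simpa [hP] using hp
    filter_upwards [ih (fun i => hfm i.succ) (fun i => hf i.succ)
      (Polynomial.leadingCoeff_ne_zero.2 hP0)] with y hy
    have hPy : P.map (MvPolynomial.eval fun i => f i.succ (y i)) ≠ 0 := fun h => hy <| by
      simpa using congrArg (Polynomial.coeff · P.natDegree) h
    filter_upwards [ae_polynomial_eval_ne_zero (hf 0) hPy] with x hx
    rw [hP, ← MvPolynomial.eval_eq_eval_mv_eval'] at hx
    convert hx using 4 with i
    cases i using Fin.cases <;> rfl

theorem ae_mvPolynomial_eval_ne_zero [Fintype σ] {X : σ → Type*} [∀ i, MeasurableSpace (X i)]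
    {μ : ∀ i, Measure (X i)} [∀ i, SigmaFinite (μ i)] {f : ∀ i, X i → R}
    (hfm : ∀ i, Measurable (f i)) (hf : ∀ i c, ∀ᵐ x ∂μ i, f i x ≠ c)
    {p : MvPolynomial σ R} (hp : p ≠ 0) :
    ∀ᵐ x ∂Measure.pi μ, MvPolynomial.eval (fun i => f i (x i)) p ≠ 0 := by
  let e := (Fintype.equivFin σ).symm
  have hp' : MvPolynomial.rename e.symm p ≠ 0 :=
    (map_ne_zero_iff _ (MvPolynomial.rename_injective _ e.symm.injective)).2 hp
  rw [← Measure.pi_map_piCongrLeft e μ, ae_map_iff (MeasurableEquiv.measurable _).aemeasurable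
    (measurableSet_mvPolynomial_eval_ne_zero hfm p)]
  filter_upwards [ae_mvPolynomial_eval_ne_zero_fin (fun i => hfm (e i)) (fun i => hf (e i)) hp']
    with x hx
  rw [MvPolynomial.eval_rename] at hx
  convert hx using 4 with i
  obtain ⟨j, rfl⟩ := e.surjective i
  simp only [MeasurableEquiv.piCongrLeft_apply_apply, Function.comp_apply]
  rw [e.symm_apply_apply]

end GenericPolynomial

section IndependentColumns

variable {R F l m n κ : Type*} [CommRing R] [Field F] [Fintype m] [Fintype n]

theorem linearIndependent_col_of_mul [Finite κ] {P : Matrix l m R} {A : Matrix m κ R}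
    (h : LinearIndependent R (P * A).col) : LinearIndependent R A.col := by
  cases nonempty_fintype κ
  rw [← mulVec_injective_iff] at h ⊢
  refine Function.Injective.of_comp (f := P.mulVec) ?_
  simpa [Function.comp_def] using h

theorem exists_left_inverse_of_linearIndependent_col [Finite κ] [DecidableEq κ] {A : Matrix m κ F}
    (hA : LinearIndependent F A.col) : ∃ P : Matrix κ m F, P * A = 1 := by
  classical
  cases nonempty_fintype κ
  obtain ⟨g, hg⟩ := (toLin' A).exists_leftInverse_of_injective
    (LinearMap.ker_eq_bot.2 (mulVec_injective_iff.2 hA))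
  refine ⟨LinearMap.toMatrix' g, ?_⟩
  simpa [LinearMap.toMatrix'_comp] using congrArg LinearMap.toMatrix' hg

theorem exists_linearIndependent_col [Fintype κ] (h : Fintype.card κ ≤ Fintype.card m) :
    ∃ E : Matrix m κ F, LinearIndependent F E.col := by
  classical
  obtain ⟨e⟩ := Function.Embedding.nonempty_of_card_le h
  exact ⟨(1 : Matrix m m F).submatrix id e,
    (linearIndependent_cols_of_isUnit isUnit_one).comp e e.injective⟩

theorem exists_mul_linearIndependent_col [Fintype κ] (h : Fintype.card κ ≤ Fintype.card m)
    {B : Matrix n κ F} (hB : LinearIndependent F B.col) :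
    ∃ A : Matrix m n F, LinearIndependent F (A * B).col := by
  classical
  obtain ⟨L, hL⟩ := exists_left_inverse_of_linearIndependent_col hB
  obtain ⟨E, hE⟩ := exists_linearIndependent_col (F := F) h
  exact ⟨E * L, by rwa [Matrix.mul_assoc, hL, Matrix.mul_one]⟩

end IndependentColumns

section GenericIndependence

variable {F m n κ : Type*} [Field F] [MeasurableSpace F] [MeasurableAdd₂ F] [MeasurableMul₂ F]
  [MeasurableSingletonClass F]

theorem ae_linearIndependent_col_map_eval [Finite m] [Finite κ] {σ : Type*} [Fintype σ]
    {X : σ → Type*} [∀ i, MeasurableSpace (X i)] {μ : ∀ i, Measure (X i)} [∀ i, SigmaFinite (μ i)]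
    {f : ∀ i, X i → F} (hfm : ∀ i, Measurable (f i)) (hf : ∀ i c, ∀ᵐ x ∂μ i, f i x ≠ c)
    (A : Matrix m κ (MvPolynomial σ F)) {z : σ → F}
    (hz : LinearIndependent F (A.map (MvPolynomial.eval z)).col) :
    ∀ᵐ x ∂Measure.pi μ,
      LinearIndependent F (A.map (MvPolynomial.eval fun i => f i (x i))).col := by
  classical
  cases nonempty_fintype m
  cases nonempty_fintype κ
  obtain ⟨P, hP⟩ := exists_left_inverse_of_linearIndependent_col hz
  have eval_det (w : σ → F) : MvPolynomial.eval w (P.map (MvPolynomial.C (σ := σ)) * A).det =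
      (P * A.map (MvPolynomial.eval w)).det := by
    rw [RingHom.map_det, RingHom.mapMatrix_apply, Matrix.map_mul, Matrix.map_map]
    congr 2
    ext
    simp
  have hdet : (P.map (MvPolynomial.C (σ := σ)) * A).det ≠ 0 := fun h => by
    simpa [h, hP] using eval_det z
  filter_upwards [ae_mvPolynomial_eval_ne_zero hfm hf hdet] with x hx
  rw [eval_det] at hx
  exact linearIndependent_col_of_mul (linearIndependent_cols_of_det_ne_zero hx)

theorem ae_linearIndependent_col_transpose_mul [Fintype m] [Fintype n] [Fintype κ]
    {X : n × m → Type*} [∀ i, MeasurableSpace (X i)] {μ : ∀ i, Measure (X i)}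
    [∀ i, SigmaFinite (μ i)]
    {f : ∀ i, X i → F} (hfm : ∀ i, Measurable (f i)) (hf : ∀ i c, ∀ᵐ x ∂μ i, f i x ≠ c)
    (h : Fintype.card κ ≤ Fintype.card m) {B : Matrix n κ F} (hB : LinearIndependent F B.col) :
    ∀ᵐ x ∂Measure.pi μ,
      LinearIndependent F ((of fun i j => f (i, j) (x (i, j)))ᵀ * B).col := by
  have map_eval (w : n × m → F) :
      ((mvPolynomialX n m F)ᵀ * B.map (MvPolynomial.C (σ := n × m))).map (MvPolynomial.eval w) =
        (of fun i j => w (i, j))ᵀ * B := by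
    ext
    simp [Matrix.mul_apply]
  obtain ⟨A, hA⟩ := exists_mul_linearIndependent_col h hB
  have hgen := ae_linearIndependent_col_map_eval hfm hf
    ((mvPolynomialX n m F)ᵀ * B.map (MvPolynomial.C (σ := n × m))) (z := fun i => A i.2 i.1)
    (by rw [map_eval]; exact hA)
  simpa only [map_eval] using hgen

end GenericIndependence

section RandomPhase

theorem ae_ne_of_analyticOnNhd {E : Type*} [NormedAddCommGroup E] [NormedSpace ℝ E]
    {μ : Measure ℝ} [NullSingletonClass μ] {f : ℝ → E} (hf : AnalyticOnNhd ℝ f Set.univ)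
    {c : E} {t : ℝ} (ht : f t ≠ c) : ∀ᵐ x ∂μ, f x ≠ c := by
  have hcodiscrete := (hf.sub analyticOnNhd_const).preimage_zero_mem_codiscrete
    (x := t) (sub_ne_zero.2 ht)
  filter_upwards [Measure.restrict_univ (μ := μ) ▸
    ae_restrict_le_codiscreteWithin MeasurableSet.univ hcodiscrete] with x hx
  exact sub_ne_zero.1 hx

theorem ae_exp_I_mul_ne (c : ℂ) : ∀ᵐ φ : ℝ, Complex.exp (Complex.I * φ) ≠ c := by
  have hanalytic : AnalyticOnNhd ℝ (fun φ : ℝ => Complex.exp (Complex.I * φ)) Set.univ :=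
    fun φ _ => (analyticAt_cexp.restrictScalars (𝕜 := ℝ)).fun_comp
      (analyticAt_const.mul (Complex.ofRealCLM.analyticAt φ))
  by_cases hc : c = 1
  · refine ae_ne_of_analyticOnNhd hanalytic (t := Real.pi) ?_
    rw [hc, mul_comm, Complex.exp_pi_mul_I]
    norm_num
  · exact ae_ne_of_analyticOnNhd hanalytic (t := 0) (by simpa using Ne.symm hc)

theorem random_phase_projection_full_column_rank_ae_general {m n κ : Type*} [Fintype m] [Fintype n]
    [Fintype κ] (h : Fintype.card κ ≤ Fintype.card m) {B : Matrix n κ ℂ}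
    (hB : LinearIndependent ℂ B.col) :
    ∀ᵐ Φ : n × m → ℝ,
      LinearIndependent ℂ ((of fun i j => Complex.exp (Complex.I * Φ (i, j)))ᴴ * B).col := by
  have hne (c : ℂ) : ∀ᵐ φ : ℝ, star (Complex.exp (Complex.I * φ)) ≠ c := by
    filter_upwards [ae_exp_I_mul_ne (star c)] with φ hφ hc
    exact hφ (by rw [← hc, star_star])
  exact ae_linearIndependent_col_transpose_mul
    (f := fun _ (φ : ℝ) => star (Complex.exp (Complex.I * φ))) (fun _ => by fun_prop)
    (fun _ => hne) h hB

end RandomPhase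

/-- Random phase-only projection preserves full column rank almost surely: if
`B ∈ ℂ^{N×K}` has full column rank `K ≤ M ≤ N`, then for Lebesgue-almost every
real phase matrix `Φ`, the matrix `W(Φ)ᴴ ⬝ B` (with `W(Φ)(n,m) = exp(i Φ(n,m))`)
has full column rank `K`. -/
theorem random_phase_projection_full_column_rank_ae {N M K : ℕ}
    (hK : K ≤ M) (hMN : M ≤ N)
    (B : Matrix (Fin N) (Fin K) ℂ)
    (hB : LinearIndependent ℂ (fun k : Fin K => fun n : Fin N => B n k)) :
    volume {Φ : Fin N × Fin M → ℝ |
      ¬ LinearIndependent ℂ (fun k : Fin K => fun m : Fin M =>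
        (((Matrix.of fun (n : Fin N) (m' : Fin M) =>
            Complex.exp (Complex.I * (Φ (n, m') : ℂ)))ᴴ) * B) m k)} = 0 :=
  random_phase_projection_full_column_rank_ae_general (by simpa using hK) hB
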